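/- arXiv:2103.14109 — 2 statements merged into one kernel-verified Lean document; each statement's English description precedes it below -/
import Mathlib

section
/- The function F(x) := f(x)/x is strictly monotonically decreasing on (0, ∞); moreover F(x) → Γ(1/4)²/(3√π) as x → 0⁺ and F(x) → 0 as x → ∞. -/
/-!
Write `F x = f x / x = (2/3) (x³ - x √(x⁴+1)) + (4/3) ∫_x^∞ dt/√(t⁴+1)` for `x > 0`.

* Differentiating, `F' x = 2 (x² - √(x⁴+1)) < 0`, which gives strict monotonicity.
* As `x → 0⁺` the algebraic part vanishes and the tail integral tends to the full integral over
  `(0, ∞)`. The substitution `u = t⁴/(1+t⁴)` turns the latter into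
  `B(1/4, 1/4)/4 = Γ(1/4)²/(4 √π)` (`integral_Ioi_zero_kernel`).
* As `x → ∞` the tail integral vanishes, and so does
  `x³ - x √(x⁴+1) = -x / (x² + √(x⁴+1))`, which lies between `-1/x` and `0`.
-/

open Real MeasureTheory Filter Topology

/-- The metric function `f` of the Einstein-Born-Infeld black hole:
`f(x) = (2/3)*(x^4 - x^2*sqrt(x^4+1)) + (4/3)*x*(integral of 1/sqrt(t^4+1) over (x,oo))`. -/
noncomputable def f (x : ℝ) : ℝ :=
  (2 / 3) * (x ^ 4 - x ^ 2 * Real.sqrt (x ^ 4 + 1))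
    + (4 / 3) * x * ∫ t in Set.Ioi x, 1 / Real.sqrt (t ^ 4 + 1)

lemma integrable_kernel : Integrable (fun t : ℝ => 1 / √(t ^ 4 + 1)) := by
  refine (integrable_inv_one_add_sq.const_mul 2).mono' ?_ ?_
  · exact (by fun_prop : Measurable fun t : ℝ => 1 / √(t ^ 4 + 1)).aestronglyMeasurable
  · refine Eventually.of_forall fun t => ?_
    rw [Real.norm_of_nonneg (by positivity), ← div_eq_mul_inv,
      div_le_div_iff₀ (by positivity) (by positivity)]
    have h : (1 + t ^ 2) / 2 ≤ √(t ^ 4 + 1) := by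
      apply Real.le_sqrt_of_sq_le
      nlinarith [sq_nonneg (t ^ 2 - 1), sq_nonneg (t ^ 2)]
    linarith

lemma continuous_kernel : Continuous (fun t : ℝ => 1 / √(t ^ 4 + 1)) := by
  refine continuous_const.div (by fun_prop) fun t => ?_
  positivity

lemma tail_eq (x : ℝ) :
    ∫ t in Set.Ioi x, 1 / √(t ^ 4 + 1) =
      (∫ t in Set.Ioi (0 : ℝ), 1 / √(t ^ 4 + 1)) - ∫ t in (0 : ℝ)..x, 1 / √(t ^ 4 + 1) := by
  rw [← intervalIntegral.integral_interval_add_Ioi (a := 0) (b := x)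
    integrable_kernel.integrableOn integrable_kernel.integrableOn]
  ring

lemma hasDerivAt_tail (x : ℝ) :
    HasDerivAt (fun x : ℝ => ∫ t in Set.Ioi x, 1 / √(t ^ 4 + 1)) (-(1 / √(x ^ 4 + 1))) x := by
  simp_rw [funext tail_eq]
  exact (continuous_kernel.integral_hasStrictDerivAt 0 x).hasDerivAt.const_sub _

lemma tendsto_tail_atTop :
    Tendsto (fun x : ℝ => ∫ t in Set.Ioi x, 1 / √(t ^ 4 + 1)) atTop (𝓝 0) := by
  simp_rw [funext tail_eq]
  have h := intervalIntegral_tendsto_integral_Ioi (0 : ℝ)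
    (integrable_kernel.integrableOn (s := Set.Ioi 0)) tendsto_id
  have hlim := h.const_sub (∫ t in Set.Ioi (0 : ℝ), 1 / √(t ^ 4 + 1))
  rwa [sub_self] at hlim

/-- The change of variables `u = t⁴/(1+t⁴)` maps `(0, ∞)` onto `(0, 1)`. -/
lemma image_subst :
    (fun t : ℝ => t ^ 4 / (1 + t ^ 4)) '' Set.Ioi 0 = Set.Ioo 0 1 := by
  ext u
  constructor
  · rintro ⟨t, ht, rfl⟩
    have ht : 0 < t := ht
    refine ⟨by positivity, ?_⟩
    rw [div_lt_one (by positivity)]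
    linarith
  · rintro ⟨h0, h1⟩
    have h2 : 0 < u / (1 - u) := div_pos h0 (by linarith)
    refine ⟨(u / (1 - u)) ^ (1 / 4 : ℝ), Real.rpow_pos_of_pos h2 _, ?_⟩
    have h4 : ((u / (1 - u)) ^ (1 / 4 : ℝ)) ^ 4 = u / (1 - u) := by
      rw [← Real.rpow_natCast, ← Real.rpow_mul h2.le]
      norm_num
    have h3 : 1 - u ≠ 0 := by linarith
    simp only [h4]
    field_simp
    ring

lemma injOn_subst :
    Set.InjOn (fun t : ℝ => t ^ 4 / (1 + t ^ 4)) (Set.Ioi 0) := by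
  intro a ha b hb h
  have ha : 0 < a := ha
  have hb : 0 < b := hb
  have h : a ^ 4 / (1 + a ^ 4) = b ^ 4 / (1 + b ^ 4) := h
  rw [div_eq_div_iff (by positivity) (by positivity)] at h
  exact (pow_left_inj₀ ha.le hb.le (by norm_num)).1 (by linarith : a ^ 4 = b ^ 4)

lemma hasDerivAt_subst (t : ℝ) :
    HasDerivAt (fun t : ℝ => t ^ 4 / (1 + t ^ 4)) (4 * t ^ 3 / (1 + t ^ 4) ^ 2) t := by
  have h := (hasDerivAt_pow 4 t).fun_div ((hasDerivAt_pow 4 t).const_add 1)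
    (by positivity : 1 + t ^ 4 ≠ 0)
  refine h.congr_deriv ?_
  push_cast
  ring

/-- The pulled-back integrand of `B(1/4, 1/4)` under `u = t⁴/(1+t⁴)`. -/
lemma subst_integrand {t : ℝ} (ht : 0 < t) :
    |4 * t ^ 3 / (1 + t ^ 4) ^ 2| • ((t ^ 4 / (1 + t ^ 4)) ^ ((1 / 4 : ℝ) - 1) *
      (1 - t ^ 4 / (1 + t ^ 4)) ^ ((1 / 4 : ℝ) - 1)) = 4 * (1 / √(t ^ 4 + 1)) := by
  have hs : 0 < 1 + t ^ 4 := by positivity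
  have e1 : 1 - t ^ 4 / (1 + t ^ 4) = 1 / (1 + t ^ 4) := by field_simp; ring
  have e2 : (t ^ 4 / (1 + t ^ 4)) * (1 / (1 + t ^ 4)) = (t / √(1 + t ^ 4)) ^ 4 := by
    rw [div_pow, show √(1 + t ^ 4) ^ 4 = (√(1 + t ^ 4) ^ 2) ^ 2 by ring, Real.sq_sqrt hs.le]
    field_simp
  have hq : 0 < t / √(1 + t ^ 4) := by positivity
  have e3 : ((t / √(1 + t ^ 4)) ^ 4) ^ ((1 / 4 : ℝ) - 1) = ((t / √(1 + t ^ 4)) ^ 3)⁻¹ := by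
    generalize t / √(1 + t ^ 4) = q at hq
    rw [← Real.rpow_natCast q 4, ← Real.rpow_mul hq.le, ← Real.rpow_natCast q 3,
      ← Real.rpow_neg hq.le]
    norm_num
  rw [abs_of_pos (by positivity), e1, ← Real.mul_rpow (by positivity) (by positivity), e2, e3,
    smul_eq_mul, add_comm (t ^ 4) 1]
  have h4 : (1 + t ^ 4) ^ 2 = √(1 + t ^ 4) ^ 4 := by
    rw [show √(1 + t ^ 4) ^ 4 = (√(1 + t ^ 4) ^ 2) ^ 2 by ring, Real.sq_sqrt hs.le]
  have hr : √(1 + t ^ 4) ≠ 0 := by positivity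
  rw [h4]
  field_simp

lemma integral_beta_quarter :
    ∫ u in Set.Ioo (0 : ℝ) 1, u ^ ((1 / 4 : ℝ) - 1) * (1 - u) ^ ((1 / 4 : ℝ) - 1) =
      Real.Gamma (1 / 4) ^ 2 / √π := by
  have hβ := ProbabilityTheory.beta_eq_betaIntegralReal (1 / 4) (1 / 4) (by norm_num) (by norm_num)
  have hc : Complex.betaIntegral (1 / 4 : ℝ) (1 / 4 : ℝ) =
      ((∫ u in (0 : ℝ)..1, u ^ ((1 / 4 : ℝ) - 1) * (1 - u) ^ ((1 / 4 : ℝ) - 1) : ℝ) : ℂ) := by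
    rw [Complex.betaIntegral, ← intervalIntegral.integral_ofReal]
    refine intervalIntegral.integral_congr fun u hu => ?_
    rw [Set.uIcc_of_le zero_le_one] at hu
    simp only [Complex.ofReal_mul]
    rw [Complex.ofReal_cpow hu.1, Complex.ofReal_cpow (by linarith [hu.2])]
    norm_num
  rw [hc, Complex.ofReal_re] at hβ
  rw [← integral_Ioc_eq_integral_Ioo, ← intervalIntegral.integral_of_le zero_le_one, ← hβ,
    ProbabilityTheory.beta, show (1 / 4 + 1 / 4 : ℝ) = 1 / 2 by norm_num,
    Real.Gamma_one_half_eq, sq]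

lemma integral_Ioi_zero_kernel :
    ∫ t in Set.Ioi (0 : ℝ), 1 / √(t ^ 4 + 1) = Real.Gamma (1 / 4) ^ 2 / (4 * √π) := by
  have h := integral_image_eq_integral_abs_deriv_smul measurableSet_Ioi
    (fun t _ => (hasDerivAt_subst t).hasDerivWithinAt) injOn_subst
    (fun u : ℝ => u ^ ((1 / 4 : ℝ) - 1) * (1 - u) ^ ((1 / 4 : ℝ) - 1))
  rw [image_subst, integral_beta_quarter,
    setIntegral_congr_fun measurableSet_Ioi (fun t ht => subst_integrand ht),
    integral_const_mul] at h
  have hp : √π ≠ 0 := by positivity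
  field_simp at h ⊢
  linarith

/-- The function `F x = f x / x` with the division by `x` carried out. -/
noncomputable def reducedF (x : ℝ) : ℝ :=
  (2 / 3) * (x ^ 3 - x * √(x ^ 4 + 1)) + (4 / 3) * ∫ t in Set.Ioi x, 1 / √(t ^ 4 + 1)

lemma f_div_eq {x : ℝ} (hx : 0 < x) : f x / x = reducedF x := by
  unfold f reducedF
  field_simp

lemma hasDerivAt_reducedF (x : ℝ) :
    HasDerivAt reducedF (2 * (x ^ 2 - √(x ^ 4 + 1))) x := by
  have hp : 0 < x ^ 4 + 1 := by positivity
  have hs : HasDerivAt (fun x : ℝ => √(x ^ 4 + 1)) (4 * x ^ 3 / (2 * √(x ^ 4 + 1))) x := by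
    have := ((hasDerivAt_pow 4 x).add_const 1).sqrt hp.ne'
    simpa using this
  have h := (((hasDerivAt_pow 3 x).fun_sub ((hasDerivAt_id' x).fun_mul hs)).const_mul
    (2 / 3)).fun_add ((hasDerivAt_tail x).const_mul (4 / 3))
  refine h.congr_deriv ?_
  have hr : √(x ^ 4 + 1) ≠ 0 := by positivity
  have h2 : √(x ^ 4 + 1) ^ 2 = x ^ 4 + 1 := Real.sq_sqrt hp.le
  field_simp
  norm_num
  linear_combination 4 * h2

lemma strictAnti_reducedF : StrictAnti reducedF := by
  refine strictAnti_of_deriv_neg fun x => ?_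
  rw [(hasDerivAt_reducedF x).deriv]
  have : x ^ 2 < √(x ^ 4 + 1) := Real.lt_sqrt_of_sq_lt (by nlinarith)
  linarith

lemma tendsto_algebraic_atTop :
    Tendsto (fun x : ℝ => x ^ 3 - x * √(x ^ 4 + 1)) atTop (𝓝 0) := by
  refine tendsto_of_tendsto_of_tendsto_of_le_of_le'
    (by simpa using (tendsto_inv_atTop_zero (𝕜 := ℝ)).neg : Tendsto (fun x : ℝ => -x⁻¹) atTop (𝓝 0))
    tendsto_const_nhds ?_ ?_
  · filter_upwards [eventually_gt_atTop 0] with x hx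
    have : √(x ^ 4 + 1) ≤ x ^ 2 + (x ^ 2)⁻¹ := by
      apply Real.sqrt_le_iff.2 ⟨by positivity, ?_⟩
      have h1 : x ^ 2 * (x ^ 2)⁻¹ = 1 := mul_inv_cancel₀ (by positivity)
      nlinarith [sq_nonneg ((x ^ 2)⁻¹)]
    have h2 := mul_le_mul_of_nonneg_left this hx.le
    have h3 : x * (x ^ 2 + (x ^ 2)⁻¹) = x ^ 3 + x⁻¹ := by field_simp
    linarith
  · filter_upwards [eventually_gt_atTop 0] with x hx
    have : x ^ 2 ≤ √(x ^ 4 + 1) := Real.le_sqrt_of_sq_le (by nlinarith)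
    nlinarith [mul_le_mul_of_nonneg_left this hx.le]

/-- `F x = f x / x` is strictly decreasing on `(0, oo)`, tends to
`Gamma(1/4)^2/(3*sqrt(pi))` as `x` tends to `0` from the right, and tends to `0`
as `x` tends to infinity. -/
theorem F_strictAntiOn_and_limits :
    StrictAntiOn (fun x : ℝ => f x / x) (Set.Ioi (0 : ℝ)) ∧
    Tendsto (fun x : ℝ => f x / x) (𝓝[>] (0 : ℝ))
      (𝓝 (Real.Gamma (1 / 4) ^ 2 / (3 * Real.sqrt π))) ∧
    Tendsto (fun x : ℝ => f x / x) atTop (𝓝 0) := by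
  refine ⟨?_, ?_, ?_⟩
  · exact (strictAnti_reducedF.strictAntiOn _).congr fun x hx => (f_div_eq hx).symm
  · have h0 : reducedF 0 = Real.Gamma (1 / 4) ^ 2 / (3 * √π) := by
      rw [reducedF, integral_Ioi_zero_kernel]
      have hp : √π ≠ 0 := by positivity
      field_simp
      norm_num
    rw [← h0]
    refine ((hasDerivAt_reducedF 0).continuousAt.tendsto.mono_left nhdsWithin_le_nhds).congr' ?_
    filter_upwards [self_mem_nhdsWithin] with x hx using (f_div_eq hx).symm
  · have h : Tendsto reducedF atTop (𝓝 0) := by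
      have := (tendsto_algebraic_atTop.const_mul (2 / 3)).add
        (tendsto_tail_atTop.const_mul (4 / 3))
      rwa [mul_zero, mul_zero, add_zero] at this
    refine h.congr' ?_
    filter_upwards [eventually_gt_atTop 0] with x hx using (f_div_eq hx).symm
end

section
/- The function G(x) := F(x) − x·F'(x), where F(x) = f(x)/x, is strictly monotonically decreasing on (0, ∞); moreover G(x) → Γ(1/4)²/(3√π) as x → 0⁺ and G(x) → 0 as x → ∞. -/
/-!
Write `S x = √(x⁴ + 1)` and `I x = ∫_x^∞ dt / S t`. Since `I' = -1 / S`, differentiating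
`F = (2/3) (x³ - x S) + (4/3) I` gives `F' = 2 x² - 2 S`, hence
`G = F - x F' = (4/3) (x S - x³ + I)` and `G' = -x F'' = 4 x² (x² / S - 1)`, which is negative
because `x² < S`.

At infinity `x S - x³ = x / (S + x²) ≤ 1 / x` and `I → 0`, so `G → 0`. At `0` the function `I` is
continuous, so `G → (4/3) I 0`, and `I 0 = Γ(1/4)² / (4 √π)`. The latter follows by writing
`√π / √(1 + t⁴) = ∫_0^∞ s^(-1/2) exp (-(1 + t⁴) s) ds` and exchanging the two integrals: the
`t`-integral of `exp (-s t⁴)` is `s^(-1/4) Γ(1/4) / 4`, and the remaining `s`-integral is again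
`Γ(1/4)`.
-/


open Real MeasureTheory Filter Topology

/-- `F x = f x / x`. -/
noncomputable def F (x : ℝ) : ℝ := f x / x

/-- The tail integral `I x = ∫_x^∞ dt / √(t⁴ + 1)`. -/
noncomputable def tailInt (x : ℝ) : ℝ := ∫ t in Set.Ioi x, 1 / Real.sqrt (t ^ 4 + 1)

lemma sqrt_quartic_pos (x : ℝ) : 0 < Real.sqrt (x ^ 4 + 1) := by positivity

lemma continuous_integrand : Continuous fun t : ℝ => 1 / Real.sqrt (t ^ 4 + 1) :=
  continuous_const.div (by fun_prop) fun t => (sqrt_quartic_pos t).ne'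

lemma integrable_integrand : Integrable fun t : ℝ => 1 / Real.sqrt (t ^ 4 + 1) := by
  refine (integrable_inv_one_add_sq.const_mul 2).mono'
    continuous_integrand.aestronglyMeasurable (Eventually.of_forall fun t => ?_)
  rw [Real.norm_of_nonneg (by positivity), ← div_eq_mul_inv,
    div_le_div_iff₀ (sqrt_quartic_pos t) (by positivity), one_mul]
  have h : (1 + t ^ 2) / 2 ≤ Real.sqrt (t ^ 4 + 1) :=
    Real.le_sqrt_of_sq_le (by nlinarith [sq_nonneg (t ^ 2 - 1), sq_nonneg (t ^ 2)])
  linarith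

lemma tailInt_eq (x : ℝ) :
    tailInt x = tailInt 0 - ∫ t in (0 : ℝ)..x, 1 / Real.sqrt (t ^ 4 + 1) := by
  have h := intervalIntegral.integral_interval_add_Ioi (a := 0) (b := x)
    integrable_integrand.integrableOn integrable_integrand.integrableOn
  unfold tailInt
  linarith

lemma hasDerivAt_tailInt (x : ℝ) :
    HasDerivAt tailInt (-(1 / Real.sqrt (x ^ 4 + 1))) x := by
  have h : HasDerivAt (fun u => ∫ t in (0 : ℝ)..u, 1 / Real.sqrt (t ^ 4 + 1))
      (1 / Real.sqrt (x ^ 4 + 1)) x :=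
    intervalIntegral.integral_hasDerivAt_right (continuous_integrand.intervalIntegrable _ _)
      (continuous_integrand.stronglyMeasurableAtFilter _ _) continuous_integrand.continuousAt
  rw [funext tailInt_eq]
  exact h.const_sub _

lemma tendsto_tailInt_atTop : Tendsto tailInt atTop (𝓝 0) := by
  have h := intervalIntegral_tendsto_integral_Ioi 0
    (integrable_integrand.integrableOn (s := Set.Ioi (0 : ℝ))) tendsto_id
  have h2 := h.const_sub (tailInt 0)
  rw [show tailInt 0 - ∫ t in Set.Ioi (0 : ℝ), 1 / Real.sqrt (t ^ 4 + 1) = 0 from sub_self _] at h2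
  exact h2.congr fun x => (tailInt_eq x).symm

lemma hasDerivAt_sqrt_quartic (x : ℝ) :
    HasDerivAt (fun x : ℝ => Real.sqrt (x ^ 4 + 1)) (2 * x ^ 3 / Real.sqrt (x ^ 4 + 1)) x := by
  have h := ((hasDerivAt_pow 4 x).add_const 1).sqrt (by positivity)
  convert h using 1
  have := sqrt_quartic_pos x
  field_simp
  push_cast
  ring

lemma F_eq {x : ℝ} (hx : 0 < x) :
    F x = (2 / 3) * (x ^ 3 - x * Real.sqrt (x ^ 4 + 1)) + (4 / 3) * tailInt x := by
  unfold F f tailInt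
  field_simp

lemma hasDerivAt_F {x : ℝ} (hx : 0 < x) :
    HasDerivAt F (2 * x ^ 2 - 2 * Real.sqrt (x ^ 4 + 1)) x := by
  have h := ((((hasDerivAt_pow 3 x).sub
    ((hasDerivAt_id x).mul (hasDerivAt_sqrt_quartic x))).const_mul (2 / 3)).add
    ((hasDerivAt_tailInt x).const_mul (4 / 3)))
  have h2 := h.congr_of_eventuallyEq (f₁ := F)
    (by filter_upwards [Ioi_mem_nhds hx] with y hy using F_eq hy)
  refine h2.congr_deriv ?_
  have hS := sqrt_quartic_pos x
  have hsq : Real.sqrt (x ^ 4 + 1) ^ 2 = x ^ 4 + 1 := Real.sq_sqrt (by positivity)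
  simp only [id_eq]
  push_cast
  field_simp
  linear_combination 4 * hsq

/-- The closed form of `G = F - x F'`, valid on `(0, ∞)`. -/
noncomputable def Gclosed (x : ℝ) : ℝ :=
  (4 / 3) * (x * Real.sqrt (x ^ 4 + 1) - x ^ 3 + tailInt x)

lemma G_eq {x : ℝ} (hx : 0 < x) : F x - x * deriv F x = Gclosed x := by
  rw [(hasDerivAt_F hx).deriv, F_eq hx, Gclosed]
  ring

lemma hasDerivAt_Gclosed (x : ℝ) :
    HasDerivAt Gclosed (4 * x ^ 2 * (x ^ 2 / Real.sqrt (x ^ 4 + 1) - 1)) x := by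
  have h := (((((hasDerivAt_id x).mul (hasDerivAt_sqrt_quartic x)).sub
    (hasDerivAt_pow 3 x)).add (hasDerivAt_tailInt x)).const_mul (4 / 3))
  refine HasDerivAt.congr_deriv (f := Gclosed) h ?_
  have hS := sqrt_quartic_pos x
  have hsq : Real.sqrt (x ^ 4 + 1) ^ 2 = x ^ 4 + 1 := Real.sq_sqrt (by positivity)
  simp only [id_eq]
  push_cast
  field_simp
  linear_combination hsq

lemma sq_lt_sqrt_quartic (x : ℝ) : x ^ 2 < Real.sqrt (x ^ 4 + 1) :=
  Real.lt_sqrt_of_sq_lt (by nlinarith)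

lemma strictAntiOn_Gclosed : StrictAntiOn Gclosed (Set.Ioi 0) := by
  refine strictAntiOn_of_deriv_neg (convex_Ioi 0)
    (fun x _ => (hasDerivAt_Gclosed x).continuousAt.continuousWithinAt) fun x hx => ?_
  rw [interior_Ioi] at hx
  have hx0 : 0 < x := hx
  rw [(hasDerivAt_Gclosed x).deriv]
  have : x ^ 2 / Real.sqrt (x ^ 4 + 1) < 1 :=
    (div_lt_one (sqrt_quartic_pos x)).2 (sq_lt_sqrt_quartic x)
  exact mul_neg_of_pos_of_neg (by positivity) (by linarith)

lemma tendsto_Gclosed_atTop : Tendsto Gclosed atTop (𝓝 0) := by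
  have h1 : Tendsto (fun x : ℝ => x * Real.sqrt (x ^ 4 + 1) - x ^ 3) atTop (𝓝 0) := by
    refine tendsto_of_tendsto_of_tendsto_of_le_of_le' tendsto_const_nhds
      tendsto_inv_atTop_zero ?_ ?_
    · filter_upwards [eventually_gt_atTop 0] with x hx
      nlinarith [sq_lt_sqrt_quartic x]
    · filter_upwards [eventually_gt_atTop 0] with x hx
      -- `√(x⁴ + 1) ≤ x² + 1 / x²`
      have h : Real.sqrt (x ^ 4 + 1) ≤ x ^ 2 + (x ^ 2)⁻¹ := by
        refine Real.sqrt_le_iff.2 ⟨by positivity, ?_⟩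
        have : (x ^ 2 + (x ^ 2)⁻¹) ^ 2 = x ^ 4 + 2 + ((x ^ 2)⁻¹) ^ 2 := by
          field_simp
          ring
        rw [this]
        nlinarith [sq_nonneg ((x ^ 2)⁻¹)]
      have h2 := mul_le_mul_of_nonneg_left h hx.le
      have h3 : x * (x ^ 2 + (x ^ 2)⁻¹) = x ^ 3 + x⁻¹ := by field_simp
      linarith
  have h := (h1.add tendsto_tailInt_atTop).const_mul (4 / 3)
  rw [add_zero, mul_zero] at h
  exact h

/-- `Γ(1/2) / √(t⁴ + 1)` as a Gamma integral with rate `t⁴ + 1`. -/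
lemma gamma_half_integral (t : ℝ) :
    ∫ s in Set.Ioi (0 : ℝ), s ^ (-(1 / 2) : ℝ) * Real.exp (-s) * Real.exp (-s * t ^ (4 : ℝ))
      = Real.sqrt π * (1 / Real.sqrt (t ^ 4 + 1)) := by
  have h := Real.integral_rpow_mul_exp_neg_mul_Ioi (a := 1 / 2) (r := t ^ 4 + 1)
    (by norm_num) (by positivity)
  rw [Real.Gamma_one_half_eq, ← Real.sqrt_eq_rpow, Real.sqrt_div' _ (by positivity),
    Real.sqrt_one] at h
  rw [mul_comm, ← h]
  refine setIntegral_congr_fun measurableSet_Ioi fun s _ => ?_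
  rw [mul_assoc, ← Real.exp_add, show (t ^ (4 : ℝ)) = t ^ 4 by norm_cast]
  norm_num
  left
  ring

lemma quartic_exp_integral {s : ℝ} (hs : 0 < s) :
    ∫ t in Set.Ioi (0 : ℝ), s ^ (-(1 / 2) : ℝ) * Real.exp (-s) * Real.exp (-s * t ^ (4 : ℝ))
      = Real.Gamma (1 / 4) / 4 * (Real.exp (-s) * s ^ ((1 / 4 : ℝ) - 1)) := by
  rw [integral_const_mul, integral_exp_neg_mul_rpow (by norm_num) hs,
    Real.Gamma_add_one (by norm_num),
    show (1 / 4 : ℝ) - 1 = -(1 / 2) + -1 / 4 by norm_num, Real.rpow_add hs]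
  ring

lemma tailInt_zero : tailInt 0 = Real.Gamma (1 / 4) ^ 2 / (4 * Real.sqrt π) := by
  let μ := volume.restrict (Set.Ioi (0 : ℝ))
  let k : ℝ → ℝ → ℝ := fun s t =>
    s ^ (-(1 / 2) : ℝ) * Real.exp (-s) * Real.exp (-s * t ^ (4 : ℝ))
  have hpos : ∀ᵐ s ∂μ, 0 < s := ae_restrict_mem measurableSet_Ioi
  have hinner : ∀ᵐ s ∂μ, ∫ t, k s t ∂μ =
      Real.Gamma (1 / 4) / 4 * (Real.exp (-s) * s ^ ((1 / 4 : ℝ) - 1)) := by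
    filter_upwards [hpos] with s hs using quartic_exp_integral hs
  have hgamma : Integrable (fun s : ℝ =>
      Real.Gamma (1 / 4) / 4 * (Real.exp (-s) * s ^ ((1 / 4 : ℝ) - 1))) μ :=
    (Real.GammaIntegral_convergent (by norm_num)).const_mul _
  have hint : Integrable (Function.uncurry k) (μ.prod μ) := by
    have hmeas : Measurable (Function.uncurry k) := by
      unfold k Function.uncurry
      fun_prop
    rw [integrable_prod_iff hmeas.aestronglyMeasurable]
    constructor
    · filter_upwards [hpos] with s hs
      have h := integrableOn_rpow_mul_exp_neg_mul_rpow (p := 4) (s := 0) (b := s)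
        (by norm_num) (by norm_num) hs
      simp only [Real.rpow_zero, one_mul] at h
      exact Integrable.const_mul h (s ^ (-(1 / 2) : ℝ) * Real.exp (-s))
    · refine hgamma.congr ?_
      filter_upwards [hpos, hinner] with s hs h
      rw [← h]
      refine integral_congr_ae (Eventually.of_forall fun t => ?_)
      have : 0 ≤ k s t := by
        have := Real.rpow_nonneg hs.le (-(1 / 2))
        positivity
      exact (Real.norm_of_nonneg this).symm
  have hswap := integral_integral_swap hint
  rw [integral_congr_ae hinner, integral_const_mul,
    ← Real.Gamma_eq_integral (by norm_num : (0 : ℝ) < 1 / 4)] at hswap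
  have hR : ∫ t, ∫ s, k s t ∂μ ∂μ = Real.sqrt π * tailInt 0 := by
    rw [tailInt, ← integral_const_mul]
    exact integral_congr_ae (Eventually.of_forall gamma_half_integral)
  rw [hR] at hswap
  have : 0 < Real.sqrt π := Real.sqrt_pos.2 Real.pi_pos
  field_simp
  linarith

/-- `G x = F x - x * F' x` is strictly decreasing on `(0, oo)`, tends to
`Gamma(1/4)^2/(3*sqrt(pi))` as `x` tends to `0` from the right, and tends to `0`
as `x` tends to infinity. -/
theorem G_strictAntiOn_and_limits :
    StrictAntiOn (fun x : ℝ => F x - x * deriv F x) (Set.Ioi (0 : ℝ)) ∧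
    Tendsto (fun x : ℝ => F x - x * deriv F x) (𝓝[>] (0 : ℝ))
      (𝓝 (Real.Gamma (1 / 4) ^ 2 / (3 * Real.sqrt π))) ∧
    Tendsto (fun x : ℝ => F x - x * deriv F x) atTop (𝓝 0) := by
  refine ⟨strictAntiOn_Gclosed.congr fun x hx => (G_eq hx).symm, ?_, ?_⟩
  · have h : Tendsto Gclosed (𝓝[>] 0) (𝓝 (Gclosed 0)) :=
      (hasDerivAt_Gclosed 0).continuousAt.tendsto.mono_left nhdsWithin_le_nhds
    have h0 : Gclosed 0 = Real.Gamma (1 / 4) ^ 2 / (3 * Real.sqrt π) := by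
      rw [Gclosed, tailInt_zero]
      have : 0 < Real.sqrt π := Real.sqrt_pos.2 Real.pi_pos
      field_simp
      ring
    rw [h0] at h
    refine h.congr' ?_
    filter_upwards [self_mem_nhdsWithin] with x hx using (G_eq hx).symm
  · refine tendsto_Gclosed_atTop.congr' ?_
    filter_upwards [eventually_gt_atTop 0] with x hx using (G_eq hx).symm
end
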